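/- Let a ∈ E be dominant and set β = −ρ_a. Then every α ∈ Φ_a⁺ satisfies ⟨α, β⟩ = −⟨α, ρ⟩ < 0, and consequently the counting identity #{α ∈ Φ⁺ : ⟨α, β⟩ > 0 and α ∉ Φ_a⁺} + #{α ∈ Φ : −α ∈ Φ⁺ and ⟨α, β⟩ > 0} = (1/2)·#{α ∈ Φ : ⟨α, β⟩ ≠ 0} holds. (This is the computation of the rank n_{β,+} of the polarized normal bundle in Section 4.3 of the paper, where it is shown that n_{β,+} = ½ dim(K/K_β) for β = −ρ_σ.) -/

import Mathlib

open scoped RealInnerProductSpace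

/-!
Write `s_α` for the reflection in a root `α`. The sum of a finite set stable under `s_α` is
orthogonal to `α` (`sum_inner_eq_zero`). Two applications give the sign statement.

* For `α ∈ Φ_a⁺` the set `Φ⁺ \ Φ_a⁺` is stable under `s_α`: the reflection fixes `a`, so it preserves
  the condition `⟪γ, a⟫ > 0`, and by dominance a root with this property is positive. Hence
  `⟪α, ρ⟫ = ⟪α, ρ_a⟫`.
* For `α ∈ Φ⁺` the positive roots that `s_α` keeps positive contribute `0` to `∑ ⟪γ, α⟫`, while a
  positive root `γ` sent to a negative one satisfies `⟪γ, α⟫ > 0`, because `s_α γ = γ - n α` can only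
  be negative if `n > 0`. Since `α` is of the second kind, `⟪α, ρ⟫ > 0`. No simple roots are needed.

For the count, no element of `Φ_a⁺` pairs positively with `β`, so the two sets on the left partition
`{α ∈ Φ | ⟪α, β⟫ > 0}`, which is interchanged with `{α ∈ Φ | ⟪α, β⟫ < 0}` by `α ↦ -α`.
-/

section

variable {E : Type*} [NormedAddCommGroup E] [InnerProductSpace ℝ E]

/-- The orthogonal reflection `s_α` applied to `γ`, in the form used to state that the root system
is stable under reflections. -/
noncomputable def rootRefl (α γ : E) : E := γ - (2 * ⟪γ, α⟫ / ⟪α, α⟫) • α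

lemma inner_rootRefl_self {α : E} (hα : α ≠ 0) (γ : E) : ⟪rootRefl α γ, α⟫ = -⟪γ, α⟫ := by
  have h : ⟪α, α⟫ ≠ 0 := inner_self_ne_zero.mpr hα
  rw [rootRefl, inner_sub_left, real_inner_smul_left]
  field_simp
  ring

lemma rootRefl_rootRefl {α : E} (hα : α ≠ 0) (γ : E) : rootRefl α (rootRefl α γ) = γ := by
  rw [rootRefl, inner_rootRefl_self hα, rootRefl, sub_sub, ← add_smul]
  have : 2 * ⟪γ, α⟫ / ⟪α, α⟫ + 2 * -⟪γ, α⟫ / ⟪α, α⟫ = 0 := by ring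
  rw [this, zero_smul, sub_zero]

lemma rootRefl_self {α : E} (hα : α ≠ 0) : rootRefl α α = -α := by
  have h : ⟪α, α⟫ ≠ 0 := inner_self_ne_zero.mpr hα
  rw [rootRefl, mul_div_assoc, div_self h, mul_one, two_smul]
  abel

lemma sum_inner_eq_zero {α : E} (hα : α ≠ 0) (T : Finset E)
    (hT : ∀ γ ∈ T, rootRefl α γ ∈ T) : ∑ γ ∈ T, ⟪γ, α⟫ = 0 := by
  have h : ∑ γ ∈ T, ⟪γ, α⟫ = ∑ γ ∈ T, -⟪γ, α⟫ := by
    refine Finset.sum_nbij' (rootRefl α) (rootRefl α) hT hT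
      (fun γ _ => rootRefl_rootRefl hα γ) (fun γ _ => rootRefl_rootRefl hα γ) ?_
    intro γ _
    rw [inner_rootRefl_self hα, neg_neg]
  rw [Finset.sum_neg_distrib] at h
  linarith

end

/-- Let `a` be dominant and `β = -ρ_a`.  Every `α ∈ Φ_a⁺` satisfies
`⟪α, β⟫ = -⟪α, ρ⟫ < 0`, and consequently
`#{α ∈ Φ⁺ | ⟪α, β⟫ > 0 ∧ α ∉ Φ_a⁺} + #{α ∈ Φ | -α ∈ Φ⁺ ∧ ⟪α, β⟫ > 0}
  = (1/2) #{α ∈ Φ | ⟪α, β⟫ ≠ 0}`. -/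
theorem rank_polarized_normal_bundle
    {E : Type*} [NormedAddCommGroup E] [InnerProductSpace ℝ E] [FiniteDimensional ℝ E]
    -- Φ is a finite, reduced, crystallographic root system
    (Φ : Finset E) (h0 : (0 : E) ∉ Φ)
    (hrefl : ∀ α ∈ Φ, ∀ γ ∈ Φ, γ - (2 * ⟪γ, α⟫ / ⟪α, α⟫) • α ∈ Φ)
    (hred : ∀ α ∈ Φ, ∀ t : ℝ, t • α ∈ Φ → t = 1 ∨ t = -1)
    (hcrys : ∀ α ∈ Φ, ∀ γ ∈ Φ, ∃ n : ℤ, 2 * ⟪γ, α⟫ / ⟪α, α⟫ = (n : ℝ))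
    -- Φpos is a positive system for Φ
    (Φpos : Finset E) (v : E) (hv : ∀ α ∈ Φ, ⟪α, v⟫ ≠ 0)
    (hpos : ∀ α : E, α ∈ Φpos ↔ α ∈ Φ ∧ 0 < ⟪α, v⟫)
    -- ρ is the half sum of the positive roots
    (ρ : E) (hρ : ρ = (2⁻¹ : ℝ) • ∑ α ∈ Φpos, α)
    (a : E) (ha : (∀ α ∈ Φpos, 0 ≤ ⟪a, α⟫))
    -- Φa is the set of positive roots orthogonal to a, and ρa its half sum
    (Φa : Finset E) (hΦa : ∀ α : E, α ∈ Φa ↔ α ∈ Φpos ∧ ⟪α, a⟫ = 0)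
    (ρa : E) (hρa : ρa = (2⁻¹ : ℝ) • ∑ α ∈ Φa, α)
    (β : E) (hβ : β = -ρa)
    (A : Finset E) (hA : ∀ α : E, α ∈ A ↔ α ∈ Φpos ∧ 0 < ⟪α, β⟫ ∧ α ∉ Φa)
    (B : Finset E) (hB : ∀ α : E, α ∈ B ↔ α ∈ Φ ∧ -α ∈ Φpos ∧ 0 < ⟪α, β⟫)
    (C : Finset E) (hC : ∀ α : E, α ∈ C ↔ α ∈ Φ ∧ ⟪α, β⟫ ≠ 0) :
    (∀ α ∈ Φa, ⟪α, β⟫ = -⟪α, ρ⟫ ∧ ⟪α, β⟫ < 0) ∧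
      ((A.card : ℝ) + (B.card : ℝ) = (2⁻¹ : ℝ) * (C.card : ℝ)) := by
  classical
  have hne : ∀ α ∈ Φ, α ≠ 0 := fun α hα h => h0 (h ▸ hα)
  have hr : ∀ α ∈ Φ, ∀ γ ∈ Φ, rootRefl α γ ∈ Φ := hrefl
  have hneg : ∀ α ∈ Φ, -α ∈ Φ := fun α hα => by
    simpa [rootRefl_self (hne α hα)] using hr α hα α hα
  have hρpos : ∀ α ∈ Φpos, 0 < ∑ γ ∈ Φpos, ⟪γ, α⟫ := by
    intro α hα
    obtain ⟨hαΦ, hαv⟩ := (hpos α).1 hα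
    have hα0 := hne α hαΦ
    have hαα : 0 < ⟪α, α⟫ := real_inner_self_pos.mpr hα0
    rw [← Finset.sum_filter_add_sum_filter_not Φpos (fun γ => rootRefl α γ ∈ Φpos),
      sum_inner_eq_zero hα0, zero_add]
    · refine Finset.sum_pos ?_ ⟨α, ?_⟩
      · intro γ hγ
        obtain ⟨hγ, hsγ⟩ := Finset.mem_filter.1 hγ
        obtain ⟨hγΦ, hγv⟩ := (hpos γ).1 hγ
        have h1 : ⟪rootRefl α γ, v⟫ ≤ 0 := by
          by_contra h
          exact hsγ ((hpos _).2 ⟨hr α hαΦ γ hγΦ, not_le.1 h⟩)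
        rw [rootRefl, inner_sub_left, real_inner_smul_left] at h1
        -- a nonpositive coefficient would make `s_α γ` positive
        by_contra h
        have h2 : 2 * ⟪γ, α⟫ / ⟪α, α⟫ ≤ 0 :=
          div_nonpos_of_nonpos_of_nonneg (by linarith) hαα.le
        nlinarith [mul_nonneg (neg_nonneg.2 h2) hαv.le]
      · refine Finset.mem_filter.2 ⟨hα, ?_⟩
        rw [rootRefl_self hα0, hpos, inner_neg_left]
        rintro ⟨-, h⟩
        linarith
    · intro γ hγ
      obtain ⟨hγ, hsγ⟩ := Finset.mem_filter.1 hγ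
      exact Finset.mem_filter.2 ⟨hsγ, by rwa [rootRefl_rootRefl hα0]⟩
  have hsub : Φa ⊆ Φpos := fun α hα => ((hΦa α).1 hα).1
  have hρeq : ∀ α ∈ Φa, ∑ γ ∈ Φa, ⟪γ, α⟫ = ∑ γ ∈ Φpos, ⟪γ, α⟫ := by
    intro α hα
    obtain ⟨hαp, hαa⟩ := (hΦa α).1 hα
    have hαΦ := ((hpos α).1 hαp).1
    rw [← Finset.sum_sdiff hsub, sum_inner_eq_zero (hne α hαΦ) (Φpos \ Φa), zero_add]
    intro γ hγ
    obtain ⟨hγ, hγa⟩ := Finset.mem_sdiff.1 hγ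
    have hγΦ := ((hpos γ).1 hγ).1
    have hsΦ := hr α hαΦ γ hγΦ
    have hsa : ⟪rootRefl α γ, a⟫ = ⟪γ, a⟫ := by
      rw [rootRefl, inner_sub_left, real_inner_smul_left, hαa, mul_zero, sub_zero]
    have hγa' : ⟪γ, a⟫ ≠ 0 := fun h => hγa ((hΦa γ).2 ⟨hγ, h⟩)
    have hγ0 : 0 < ⟪γ, a⟫ := lt_of_le_of_ne (real_inner_comm a γ ▸ ha γ hγ) hγa'.symm
    refine Finset.mem_sdiff.2 ⟨?_, fun h => hγa' (hsa ▸ ((hΦa _).1 h).2)⟩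
    by_contra hs
    -- otherwise `-s_α γ` is a positive root pairing negatively with the dominant vector `a`
    have h1 : ⟪rootRefl α γ, v⟫ < 0 :=
      lt_of_le_of_ne (not_lt.1 fun h => hs ((hpos _).2 ⟨hsΦ, h⟩)) (hv _ hsΦ)
    have h2 := ha _ ((hpos (-rootRefl α γ)).2 ⟨hneg _ hsΦ, by rw [inner_neg_left]; linarith⟩)
    rw [inner_neg_right, real_inner_comm, hsa] at h2
    linarith
  have hsign : ∀ α ∈ Φa, ⟪α, β⟫ = -⟪α, ρ⟫ ∧ ⟪α, β⟫ < 0 := by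
    intro α hα
    have h1 : ⟪α, β⟫ = -(2⁻¹ * ∑ γ ∈ Φa, ⟪γ, α⟫) := by
      rw [hβ, hρa, inner_neg_right, real_inner_smul_right, real_inner_comm, sum_inner]
    have h2 : ⟪α, ρ⟫ = 2⁻¹ * ∑ γ ∈ Φpos, ⟪γ, α⟫ := by
      rw [hρ, real_inner_smul_right, real_inner_comm, sum_inner]
    have h3 := hρpos α (hsub hα)
    rw [h1, h2, hρeq α hα]
    exact ⟨rfl, by linarith⟩
  refine ⟨hsign, ?_⟩
  have hAB : (A ∪ B) = Φ.filter (fun α => 0 < ⟪α, β⟫) := by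
    ext α
    rw [Finset.mem_union, hA, hB, Finset.mem_filter]
    constructor
    · rintro (⟨h, h', -⟩ | ⟨h, -, h'⟩)
      · exact ⟨((hpos α).1 h).1, h'⟩
      · exact ⟨h, h'⟩
    · rintro ⟨h, h'⟩
      rcases lt_or_gt_of_ne (hv α h) with hlt | hgt
      · exact Or.inr ⟨h, (hpos _).2 ⟨hneg α h, by rw [inner_neg_left]; linarith⟩, h'⟩
      · exact Or.inl ⟨(hpos α).2 ⟨h, hgt⟩, h', fun hα => h'.not_gt (hsign α hα).2⟩
  have hdisj : Disjoint A B := by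
    rw [Finset.disjoint_left]
    intro α h h'
    have h1 := ((hpos _).1 ((hA α).1 h).1).2
    have h2 := ((hpos _).1 ((hB α).1 h').2.1).2
    rw [inner_neg_left] at h2
    linarith
  have hCeq : C = Φ.filter (fun α => 0 < ⟪α, β⟫) ∪ Φ.filter (fun α => ⟪α, β⟫ < 0) := by
    ext α
    rw [hC, Finset.mem_union, Finset.mem_filter, Finset.mem_filter, ← and_or_left, ne_iff_lt_or_gt,
      or_comm]
  have hdisj' : Disjoint (Φ.filter (fun α => 0 < ⟪α, β⟫)) (Φ.filter (fun α => ⟪α, β⟫ < 0)) :=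
    Finset.disjoint_filter.2 fun _ _ h => h.not_gt
  have hcard : (Φ.filter (fun α => 0 < ⟪α, β⟫)).card = (Φ.filter (fun α => ⟪α, β⟫ < 0)).card := by
    refine Finset.card_nbij' (fun α => -α) (fun α => -α) ?_ ?_ ?_ ?_
    · intro α h
      simp only [Finset.coe_filter, Set.mem_ofPred_eq, inner_neg_left] at h ⊢
      exact ⟨hneg α h.1, by linarith⟩
    · intro α h
      simp only [Finset.coe_filter, Set.mem_ofPred_eq, inner_neg_left] at h ⊢
      exact ⟨hneg α h.1, by linarith⟩
    · intro α _; exact neg_neg α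
    · intro α _; exact neg_neg α
  rw [← Nat.cast_add, ← Finset.card_union_of_disjoint hdisj, hAB, hCeq,
    Finset.card_union_of_disjoint hdisj', ← hcard]
  push_cast
  ring
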